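/- (Conditional Carathéodory criterion.) Let X be a stable set of functions on Ω and μ* : P(X) → L̄⁰₊ a stable outer measure. Then the collection 𝒳(μ*) of all stably μ*-measurable conditional subsets is a stable σ-algebra, and the restriction of μ* to 𝒳(μ*) is a stable measure. -/

import Mathlib

/-!
Common framework for conditional set theory and conditional measure theory
in the sense of Drapeau–Jamneshan–Karliczek–Kupper, specialized to the
measure algebra associated to a probability space `(Ω, F, P)`.

Functions on `Ω` are identified when they agree `P`-a.s., and measurable sets
are identified when their symmetric difference is a null set.  Conditional
subsets of a stable set `X` are represented by raw pairs `(V, A)` consisting of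
a set of functions and a (measurable) base set; all notions are formulated with
respect to the almost-sure identifications via the relations `cle` and `ceq`.
-/

open MeasureTheory Filter Set Topology
open scoped ENNReal

noncomputable section

namespace CondMT

variable {Ω E F' : Type*}

/-- A countable partition of `Ω` into measurable sets (modulo `P`-null sets). -/
structure Partition {Ω : Type*} (mΩ : MeasurableSpace Ω) (P : @Measure Ω mΩ) where
  part : ℕ → Set Ω
  meas : ∀ k, MeasurableSet[mΩ] (part k)
  disj : ∀ i j, i ≠ j → P (part i ∩ part j) = 0
  cover : P ((⋃ k, part k)ᶜ) = 0

variable {mΩ : MeasurableSpace Ω}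

open Classical in
/-- The concatenation `∑ x_k|A_k` of a sequence of functions along a partition:
the (a.s. unique) function equal to `x_k` on `A_k` for every `k`. -/
def Partition.concat {P : @Measure Ω mΩ} (A : Partition mΩ P) (x : ℕ → Ω → E) : Ω → E :=
  fun ω => if h : ∃ k, ω ∈ A.part k then x (Nat.find h) ω else x 0 ω

/-- A stable set of functions on `Ω`: nonempty, closed under a.s. modification and
closed under countable concatenations along partitions. -/
def Stable (P : @Measure Ω mΩ) (X : Set (Ω → E)) : Prop :=
  X.Nonempty ∧ (∀ x ∈ X, ∀ y, x =ᵐ[P] y → y ∈ X) ∧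
    ∀ (A : Partition mΩ P) (x : ℕ → Ω → E), (∀ k, x k ∈ X) → A.concat x ∈ X

/-- Raw data of a conditional subset `V|A`: the carrier `V` and the base set `A`. -/
abbrev CondRaw (Ω E : Type*) := Set (Ω → E) × Set Ω

/-- `S` represents a conditional subset of the stable set `X`: the carrier is a
stable subset of `X` and the base is measurable. -/
def IsCond (P : @Measure Ω mΩ) (X : Set (Ω → E)) (S : CondRaw Ω E) : Prop :=
  Stable P S.1 ∧ S.1 ⊆ X ∧ MeasurableSet[mΩ] S.2

/-- Conditional inclusion `V|A ⊑ W|B`: `A ⊆ B` a.s., and every `x|A`, `x ∈ V`,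
coincides a.s. on `A` with some `y|A`, `y ∈ W`. -/
def cle (P : @Measure Ω mΩ) (S T : CondRaw Ω E) : Prop :=
  P (S.2 \ T.2) = 0 ∧ ∀ x ∈ S.1, ∃ y ∈ T.1, ∀ᵐ ω ∂P, ω ∈ S.2 → x ω = y ω

/-- Identification of conditional subsets (equality in the conditional power set). -/
def ceq (P : @Measure Ω mΩ) (S T : CondRaw Ω E) : Prop := cle P S T ∧ cle P T S

/-- `x|C ∈ V|C`: the restriction of `x` to `C` agrees a.s. on `C` with an element of `V`. -/
def memOn (P : @Measure Ω mΩ) (C : Set Ω) (x : Ω → E) (V : Set (Ω → E)) : Prop :=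
  ∃ y ∈ V, ∀ᵐ ω ∂P, ω ∈ C → x ω = y ω

/-- `∑ V_k|A_k`, the set of concatenations of sequences taken from the `V_k`. -/
def concatSet (P : @Measure Ω mΩ) (A : Partition mΩ P) (V : ℕ → Set (Ω → E)) :
    Set (Ω → E) :=
  {f | ∃ x : ℕ → Ω → E, (∀ k, x k ∈ V k) ∧ f =ᵐ[P] A.concat x}

/-- Countable concatenation `∑ (V_k|B_k)|A_k := (∑ V_k|A_k)|⋃ (A_k ∩ B_k)` in the
conditional power set. -/
def condConcat (P : @Measure Ω mΩ) (A : Partition mΩ P) (S : ℕ → CondRaw Ω E) :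
    CondRaw Ω E :=
  (concatSet P A fun k => (S k).1, ⋃ k, A.part k ∩ (S k).2)

/-- Restriction `(V|A)|B := V|(A ∩ B)`. -/
def crestrict (S : CondRaw Ω E) (B : Set Ω) : CondRaw Ω E := (S.1, S.2 ∩ B)

/-- The degenerate conditional subset `X|∅ = {∗}`, the least element of `P(X)`. -/
def cbot (X : Set (Ω → E)) : CondRaw Ω E := (X, (∅ : Set Ω))

/-- The greatest element `X = X|Ω` of `P(X)`. -/
def ctop (X : Set (Ω → E)) : CondRaw Ω E := (X, (univ : Set Ω))

/-- `a` is a supremum (conditional union) of the family `s` in `(P(X), ⊑)`. -/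
def IsSupOf (P : @Measure Ω mΩ) (X : Set (Ω → E)) (s : Set (CondRaw Ω E))
    (a : CondRaw Ω E) : Prop :=
  IsCond P X a ∧ (∀ b ∈ s, cle P b a) ∧
    ∀ c, IsCond P X c → (∀ b ∈ s, cle P b c) → cle P a c

/-- `a` is an infimum (conditional intersection) of the family `s` in `(P(X), ⊑)`. -/
def IsInfOf (P : @Measure Ω mΩ) (X : Set (Ω → E)) (s : Set (CondRaw Ω E))
    (a : CondRaw Ω E) : Prop :=
  IsCond P X a ∧ (∀ b ∈ s, cle P a b) ∧
    ∀ c, IsCond P X c → (∀ b ∈ s, cle P c b) → cle P c a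

open Classical in
/-- The conditional union (supremum) of a family of conditional subsets. -/
def cSup (P : @Measure Ω mΩ) (X : Set (Ω → E)) (s : Set (CondRaw Ω E)) : CondRaw Ω E :=
  if h : ∃ a, IsSupOf P X s a then h.choose else ctop X

open Classical in
/-- The conditional intersection (infimum) of a family of conditional subsets. -/
def cInf (P : @Measure Ω mΩ) (X : Set (Ω → E)) (s : Set (CondRaw Ω E)) : CondRaw Ω E :=
  if h : ∃ a, IsInfOf P X s a then h.choose else ctop X

/-- Binary conditional union. -/
def cSup₂ (P : @Measure Ω mΩ) (X : Set (Ω → E)) (a b : CondRaw Ω E) : CondRaw Ω E :=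
  cSup P X {a, b}

/-- Binary conditional intersection. -/
def cInf₂ (P : @Measure Ω mΩ) (X : Set (Ω → E)) (a b : CondRaw Ω E) : CondRaw Ω E :=
  cInf P X {a, b}

/-- Conditional union of an indexed family. -/
def cSupFam (P : @Measure Ω mΩ) (X : Set (Ω → E)) {ι : Sort*}
    (S : ι → CondRaw Ω E) : CondRaw Ω E :=
  cSup P X (range S)

/-- Conditional intersection of an indexed family. -/
def cInfFam (P : @Measure Ω mΩ) (X : Set (Ω → E)) {ι : Sort*}
    (S : ι → CondRaw Ω E) : CondRaw Ω E :=
  cInf P X (range S)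

/-- Disjointness of conditional subsets: `V|A ⊓ W|B = {∗}`. -/
def cdisjoint (P : @Measure Ω mΩ) (X : Set (Ω → E)) (a b : CondRaw Ω E) : Prop :=
  ceq P (cInf₂ P X a b) (cbot X)

/-- The conditional complement `(V|A)^⊏ := ⊔ {W|B : W|B ⊓ V|A = {∗}}`. -/
def ccompl (P : @Measure Ω mΩ) (X : Set (Ω → E)) (a : CondRaw Ω E) : CondRaw Ω E :=
  cSup P X {b | IsCond P X b ∧ cdisjoint P X b a}

open Classical in
/-- The largest measurable set (mod null sets) satisfying a property `Φ`,
obtained by an exhaustion argument; junk value `∅` if there is none. -/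
def largestSet (P : @Measure Ω mΩ) (Φ : Set Ω → Prop) : Set Ω :=
  if h : ∃ C, MeasurableSet[mΩ] C ∧ Φ C ∧
      ∀ C', MeasurableSet[mΩ] C' → Φ C' → P (C' \ C) = 0
  then h.choose else ∅

open Classical in
/-- The smallest measurable set (mod null sets) satisfying a property `Φ`. -/
def smallestSet (P : @Measure Ω mΩ) (Φ : Set Ω → Prop) : Set Ω :=
  if h : ∃ C, MeasurableSet[mΩ] C ∧ Φ C ∧
      ∀ C', MeasurableSet[mΩ] C' → Φ C' → P (C \ C') = 0
  then h.choose else univ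

/-- Essential infimum `inf_i A_i` of a family of measurable sets in the measure algebra. -/
def essInfFam (P : @Measure Ω mΩ) {ι : Sort*} (A : ι → Set Ω) : Set Ω :=
  largestSet P fun C => ∀ i, P (C \ A i) = 0

/-- Essential supremum `sup_i A_i` of a family of measurable sets in the measure algebra. -/
def essSupFam (P : @Measure Ω mΩ) {ι : Sort*} (A : ι → Set Ω) : Set Ω :=
  smallestSet P fun C => ∀ i, P (A i \ C) = 0

/-- A stable collection: a nonempty, `ceq`-saturated family of conditional subsets of `X`
closed under countable concatenations. -/
def IsStableColl (P : @Measure Ω mΩ) (X : Set (Ω → E)) (𝒞 : Set (CondRaw Ω E)) : Prop :=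
  𝒞.Nonempty ∧ (∀ S ∈ 𝒞, IsCond P X S) ∧
    (∀ S ∈ 𝒞, ∀ T, IsCond P X T → ceq P S T → T ∈ 𝒞) ∧
    ∀ (A : Partition mΩ P) (S : ℕ → CondRaw Ω E), (∀ k, S k ∈ 𝒞) → condConcat P A S ∈ 𝒞

/-- A stable σ-algebra on `X`. -/
def IsStableSigma (P : @Measure Ω mΩ) (X : Set (Ω → E)) (𝒳 : Set (CondRaw Ω E)) : Prop :=
  IsStableColl P X 𝒳 ∧ ctop X ∈ 𝒳 ∧ (∀ S ∈ 𝒳, ccompl P X S ∈ 𝒳) ∧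
    ∀ S : ℕ → CondRaw Ω E, (∀ k, S k ∈ 𝒳) → cSupFam P X S ∈ 𝒳

/-- A stable Dynkin system on `X`. -/
def IsStableDynkin (P : @Measure Ω mΩ) (X : Set (Ω → E)) (𝒟 : Set (CondRaw Ω E)) : Prop :=
  IsStableColl P X 𝒟 ∧ ctop X ∈ 𝒟 ∧ (∀ S ∈ 𝒟, ccompl P X S ∈ 𝒟) ∧
    ∀ S : ℕ → CondRaw Ω E, (∀ k, S k ∈ 𝒟) →
      (∀ i j, i ≠ j → cdisjoint P X (S i) (S j)) → cSupFam P X S ∈ 𝒟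

/-- A stable ring on `X`. -/
def IsStableRing (P : @Measure Ω mΩ) (X : Set (Ω → E)) (𝒳 : Set (CondRaw Ω E)) : Prop :=
  IsStableColl P X 𝒳 ∧
    ∀ S ∈ 𝒳, ∀ T ∈ 𝒳, cInf₂ P X S (ccompl P X T) ∈ 𝒳 ∧ cSup₂ P X S T ∈ 𝒳

/-- The stable σ-algebra generated by a collection `ℰ`. -/
def sigmaGen (P : @Measure Ω mΩ) (X : Set (Ω → E)) (ℰ : Set (CondRaw Ω E)) :
    Set (CondRaw Ω E) :=
  ⋂₀ {𝒳 | IsStableSigma P X 𝒳 ∧ ℰ ⊆ 𝒳}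

/-- The stable Dynkin system generated by a collection `ℰ`. -/
def dynkinGen (P : @Measure Ω mΩ) (X : Set (Ω → E)) (ℰ : Set (CondRaw Ω E)) :
    Set (CondRaw Ω E) :=
  ⋂₀ {𝒟 | IsStableDynkin P X 𝒟 ∧ ℰ ⊆ 𝒟}

/-! ### Stable set functions and stable measures -/

/-- A stable set function `μ : 𝒞 → L̄⁰₊` (represented by measurable representatives,
well defined modulo identification, and commuting with countable concatenations). -/
def IsStableSetFun (P : @Measure Ω mΩ) (𝒞 : Set (CondRaw Ω E))
    (μ : CondRaw Ω E → Ω → ℝ≥0∞) : Prop :=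
  (∀ S ∈ 𝒞, Measurable[mΩ] (μ S)) ∧
    (∀ S ∈ 𝒞, ∀ T ∈ 𝒞, ceq P S T → μ S =ᵐ[P] μ T) ∧
    ∀ (A : Partition mΩ P) (S : ℕ → CondRaw Ω E), (∀ k, S k ∈ 𝒞) →
      μ (condConcat P A S) =ᵐ[P] A.concat fun k => μ (S k)

/-- Property (M1): `μ(V|A) = μ(V|A)|A + 0|Aᶜ`. -/
def M1 (P : @Measure Ω mΩ) (𝒞 : Set (CondRaw Ω E)) (μ : CondRaw Ω E → Ω → ℝ≥0∞) : Prop :=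
  ∀ S ∈ 𝒞, μ S =ᵐ[P] S.2.indicator (μ S)

/-- Property (M2): countable additivity on pairwise disjoint sequences whose
conditional union belongs to the domain. -/
def M2 (P : @Measure Ω mΩ) (X : Set (Ω → E)) (𝒳 : Set (CondRaw Ω E))
    (μ : CondRaw Ω E → Ω → ℝ≥0∞) : Prop :=
  ∀ S : ℕ → CondRaw Ω E, (∀ k, S k ∈ 𝒳) →
    (∀ i j, i ≠ j → cdisjoint P X (S i) (S j)) → cSupFam P X S ∈ 𝒳 →
    μ (cSupFam P X S) =ᵐ[P] fun ω => ∑' k, μ (S k) ω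

/-- Finite additivity: (M2) for finite pairwise disjoint families. -/
def FinAdd (P : @Measure Ω mΩ) (X : Set (Ω → E)) (𝒳 : Set (CondRaw Ω E))
    (μ : CondRaw Ω E → Ω → ℝ≥0∞) : Prop :=
  ∀ (n : ℕ) (S : Fin n → CondRaw Ω E), (∀ k, S k ∈ 𝒳) →
    (∀ i j, i ≠ j → cdisjoint P X (S i) (S j)) → cSupFam P X S ∈ 𝒳 →
    μ (cSupFam P X S) =ᵐ[P] fun ω => ∑ k, μ (S k) ω

/-- A stable measure (or stable pre-measure, when the domain is merely a stable
ring): a stable set function satisfying (M1) and (M2). -/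
def IsStableMeasureOn (P : @Measure Ω mΩ) (X : Set (Ω → E)) (𝒳 : Set (CondRaw Ω E))
    (μ : CondRaw Ω E → Ω → ℝ≥0∞) : Prop :=
  IsStableSetFun P 𝒳 μ ∧ M1 P 𝒳 μ ∧ M2 P X 𝒳 μ

/-- A finite stable measure. -/
def IsFiniteStableMeasureOn (P : @Measure Ω mΩ) (X : Set (Ω → E))
    (𝒳 : Set (CondRaw Ω E)) (μ : CondRaw Ω E → Ω → ℝ≥0∞) : Prop :=
  IsStableMeasureOn P X 𝒳 μ ∧ ∀ᵐ ω ∂P, μ (ctop X) ω < ∞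

/-- A stable probability measure. -/
def IsStableProbOn (P : @Measure Ω mΩ) (X : Set (Ω → E)) (𝒳 : Set (CondRaw Ω E))
    (μ : CondRaw Ω E → Ω → ℝ≥0∞) : Prop :=
  IsStableMeasureOn P X 𝒳 μ ∧ μ (ctop X) =ᵐ[P] fun _ => (1 : ℝ≥0∞)

/-- A stable outer measure on the conditional power set of `X`. -/
def IsStableOuter (P : @Measure Ω mΩ) (X : Set (Ω → E))
    (μ : CondRaw Ω E → Ω → ℝ≥0∞) : Prop :=
  (∀ S, IsCond P X S → Measurable[mΩ] (μ S)) ∧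
    (∀ S T, IsCond P X S → IsCond P X T → ceq P S T → μ S =ᵐ[P] μ T) ∧
    (∀ (A : Partition mΩ P) (S : ℕ → CondRaw Ω E), (∀ k, IsCond P X (S k)) →
      μ (condConcat P A S) =ᵐ[P] A.concat fun k => μ (S k)) ∧
    (∀ S, IsCond P X S → ∀ B, MeasurableSet[mΩ] B →
      μ (crestrict S B) =ᵐ[P] B.indicator (μ S)) ∧
    (∀ S T, IsCond P X S → IsCond P X T → cle P S T → ∀ᵐ ω ∂P, μ S ω ≤ μ T ω) ∧
    ∀ S : ℕ → CondRaw Ω E, (∀ k, IsCond P X (S k)) →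
      ∀ᵐ ω ∂P, μ (cSupFam P X S) ω ≤ ∑' k, μ (S k) ω

/-- Stable Carathéodory measurability with respect to a stable outer measure. -/
def CaraMeasurable (P : @Measure Ω mΩ) (X : Set (Ω → E))
    (μ : CondRaw Ω E → Ω → ℝ≥0∞) (S : CondRaw Ω E) : Prop :=
  ∀ T, IsCond P X T →
    (fun ω => μ (cInf₂ P X T S) ω + μ (cInf₂ P X T (ccompl P X S)) ω) =ᵐ[P] μ T

/-! ### Stable functions, the stable Borel σ-algebra on `L⁰`, and the integral -/

/-- The stable set `L⁰_m(E)` of all (classes of) measurable functions `Ω → E`. -/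
def l0m (P : @Measure Ω mΩ) (E : Type*) [MeasurableSpace E] : Set (Ω → E) :=
  {x | AEMeasurable x P}

/-- A stable function between stable sets of functions. -/
def StableFun (P : @Measure Ω mΩ) (X : Set (Ω → E)) (Y : Set (Ω → F'))
    (f : (Ω → E) → Ω → F') : Prop :=
  (∀ x ∈ X, f x ∈ Y) ∧ (∀ x ∈ X, ∀ y ∈ X, x =ᵐ[P] y → f x =ᵐ[P] f y) ∧
    ∀ (A : Partition mΩ P) (x : ℕ → Ω → E), (∀ k, x k ∈ X) →
      f (A.concat x) =ᵐ[P] A.concat fun k => f (x k)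

/-- The conditional preimage `f⁻¹(W|A)`. -/
def cPreimage (P : @Measure Ω mΩ) (X : Set (Ω → E)) (f : (Ω → E) → Ω → F')
    (W : CondRaw Ω F') : CondRaw Ω E :=
  ({x ∈ X | memOn P (largestSet P fun C => P (C \ W.2) = 0 ∧ ∃ x ∈ X, memOn P C (f x) W.1)
      (f x) W.1},
    largestSet P fun C => P (C \ W.2) = 0 ∧ ∃ x ∈ X, memOn P C (f x) W.1)

/-- The stable Borel σ-algebra `B(L⁰)` on `L⁰`, generated by the stable open balls. -/
def borelL0 (P : @Measure Ω mΩ) : Set (CondRaw Ω ℝ) :=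
  sigmaGen P (l0m P ℝ)
    {S | ∃ r ε : Ω → ℝ, AEMeasurable r P ∧ AEMeasurable ε P ∧ (∀ᵐ ω ∂P, 0 < ε ω) ∧
      ceq P S ({s | AEMeasurable s P ∧ ∀ᵐ ω ∂P, |s ω - r ω| < ε ω}, univ)}

/-- A stably measurable function `f : X → L⁰` with respect to a stable σ-algebra `𝒳`. -/
def StablyMeasurable (P : @Measure Ω mΩ) (X : Set (Ω → E)) (𝒳 : Set (CondRaw Ω E))
    (f : (Ω → E) → Ω → ℝ) : Prop :=
  StableFun P X (l0m P ℝ) f ∧ ∀ W ∈ borelL0 P, cPreimage P X f W ∈ 𝒳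

/-- The base set `A_x` of the stable indicator function of `S = V|A` at `x`. -/
def indBase (P : @Measure Ω mΩ) (S : CondRaw Ω E) (x : Ω → E) : Set Ω :=
  largestSet P fun C => P (C \ S.2) = 0 ∧ memOn P C x S.1

/-- The stable indicator function `1_{V|A} : X → L⁰`. -/
def cIndicator (P : @Measure Ω mΩ) (S : CondRaw Ω E) (x : Ω → E) : Ω → ℝ :=
  (indBase P S x).indicator fun _ => (1 : ℝ)

/-- Data of a stable elementary function: coefficients and conditional sets. -/
def ElemRep (Ω E : Type*) := Σ n : ℕ, (Fin n → Ω → ℝ) × (Fin n → CondRaw Ω E)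

/-- The function `∑_{k ≤ n} r_k 1_{V_k|A_k}` represented by `ρ`. -/
def repFun (P : @Measure Ω mΩ) (ρ : ElemRep Ω E) : (Ω → E) → Ω → ℝ :=
  fun x ω => ∑ k, ρ.2.1 k ω * cIndicator P (ρ.2.2 k) x ω

/-- The representation `ρ` is admissible: nonnegative `L⁰`-coefficients and a finite
pairwise disjoint family in `𝒳` whose conditional union is `X`. -/
def GoodRep (P : @Measure Ω mΩ) (X : Set (Ω → E)) (𝒳 : Set (CondRaw Ω E))
    (ρ : ElemRep Ω E) : Prop :=
  (∀ k, AEMeasurable (ρ.2.1 k) P) ∧ (∀ k, ∀ᵐ ω ∂P, 0 ≤ ρ.2.1 k ω) ∧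
    (∀ k, ρ.2.2 k ∈ 𝒳) ∧ (∀ i j, i ≠ j → cdisjoint P X (ρ.2.2 i) (ρ.2.2 j)) ∧
    ceq P (cSupFam P X ρ.2.2) (ctop X)

/-- A stable elementary function. -/
def IsElementary (P : @Measure Ω mΩ) (X : Set (Ω → E)) (𝒳 : Set (CondRaw Ω E))
    (f : (Ω → E) → Ω → ℝ) : Prop :=
  ∃ ρ : ElemRep Ω E, GoodRep P X 𝒳 ρ ∧ ∀ x ∈ X, f x =ᵐ[P] repFun P ρ x

/-- The stable Lebesgue integral `∑_k r_k μ(V_k|A_k)` of the elementary representation. -/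
def repInt (μ : CondRaw Ω E → Ω → ℝ≥0∞) (ρ : ElemRep Ω E) : Ω → ℝ≥0∞ :=
  fun ω => ∑ k, ENNReal.ofReal (ρ.2.1 k ω) * μ (ρ.2.2 k) ω

/-- The stable Lebesgue integral of a nonnegative function, as the supremum of the
integrals of the dominated stable elementary functions. -/
def cIntNN (P : @Measure Ω mΩ) (X : Set (Ω → E)) (𝒳 : Set (CondRaw Ω E))
    (μ : CondRaw Ω E → Ω → ℝ≥0∞) (f : (Ω → E) → Ω → ℝ) : Ω → ℝ≥0∞ :=
  fun ω =>
    ⨆ ρ : {ρ : ElemRep Ω E // GoodRep P X 𝒳 ρ ∧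
        ∀ x ∈ X, ∀ᵐ ω' ∂P, repFun P ρ x ω' ≤ f x ω'},
      repInt μ ρ.1 ω

/-- The positive part `f⁺` of an `L⁰`-valued function. -/
def fplus (f : (Ω → E) → Ω → ℝ) : (Ω → E) → Ω → ℝ := fun x ω => max (f x ω) 0

/-- The negative part `f⁻` of an `L⁰`-valued function. -/
def fminus (f : (Ω → E) → Ω → ℝ) : (Ω → E) → Ω → ℝ := fun x ω => max (-(f x ω)) 0

/-- Stable integrability of `f : X → L⁰`. -/
def CIntegrable (P : @Measure Ω mΩ) (X : Set (Ω → E)) (𝒳 : Set (CondRaw Ω E))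
    (μ : CondRaw Ω E → Ω → ℝ≥0∞) (f : (Ω → E) → Ω → ℝ) : Prop :=
  StablyMeasurable P X 𝒳 f ∧ (∀ᵐ ω ∂P, cIntNN P X 𝒳 μ (fplus f) ω < ∞) ∧
    ∀ᵐ ω ∂P, cIntNN P X 𝒳 μ (fminus f) ω < ∞

/-- The stable Lebesgue integral `∫_X f dμ := ∫ f⁺ dμ − ∫ f⁻ dμ`. -/
def cInt (P : @Measure Ω mΩ) (X : Set (Ω → E)) (𝒳 : Set (CondRaw Ω E))
    (μ : CondRaw Ω E → Ω → ℝ≥0∞) (f : (Ω → E) → Ω → ℝ) : Ω → ℝ :=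
  fun ω => (cIntNN P X 𝒳 μ (fplus f) ω).toReal - (cIntNN P X 𝒳 μ (fminus f) ω).toReal

/-! ### Products and sections -/

/-- The pairing `ω ↦ (x ω, y ω)`. -/
def pairFn (x : Ω → E) (y : Ω → F') : Ω → E × F' := fun ω => (x ω, y ω)

/-- The Cartesian product `X × Y` of two stable sets, as a stable set of functions
`Ω → E × F'`. -/
def prodSet (P : @Measure Ω mΩ) (X : Set (Ω → E)) (Y : Set (Ω → F')) :
    Set (Ω → E × F') :=
  {z | ∃ x ∈ X, ∃ y ∈ Y, z =ᵐ[P] pairFn x y}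

/-- The conditional rectangle `V|A × W|B := (V × W)|A ∩ B`. -/
def crect (P : @Measure Ω mΩ) (S : CondRaw Ω E) (T : CondRaw Ω F') :
    CondRaw Ω (E × F') :=
  (prodSet P S.1 T.1, S.2 ∩ T.2)

/-- The stable product σ-algebra `𝒳 ⊗ 𝒴`, generated by the conditional rectangles. -/
def prodSigma (P : @Measure Ω mΩ) (X : Set (Ω → E)) (Y : Set (Ω → F'))
    (𝒳 : Set (CondRaw Ω E)) (𝒴 : Set (CondRaw Ω F')) : Set (CondRaw Ω (E × F')) :=
  sigmaGen P (prodSet P X Y) {R | ∃ S ∈ 𝒳, ∃ T ∈ 𝒴, ceq P R (crect P S T)}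

/-- The conditional `x`-section `(Z|C)_x` of a conditional subset of `X × Y`. -/
def xsection (P : @Measure Ω mΩ) (Y : Set (Ω → F')) (Z : CondRaw Ω (E × F'))
    (x : Ω → E) : CondRaw Ω F' :=
  ({y ∈ Y | memOn P (largestSet P fun D => P (D \ Z.2) = 0 ∧ ∃ y ∈ Y, memOn P D (pairFn x y) Z.1)
      (pairFn x y) Z.1},
    largestSet P fun D => P (D \ Z.2) = 0 ∧ ∃ y ∈ Y, memOn P D (pairFn x y) Z.1)

/-- The conditional `y`-section `(Z|C)_y` of a conditional subset of `X × Y`. -/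
def ysection (P : @Measure Ω mΩ) (X : Set (Ω → E)) (Z : CondRaw Ω (E × F'))
    (y : Ω → F') : CondRaw Ω E :=
  ({x ∈ X | memOn P (largestSet P fun D => P (D \ Z.2) = 0 ∧ ∃ x ∈ X, memOn P D (pairFn x y) Z.1)
      (pairFn x y) Z.1},
    largestSet P fun D => P (D \ Z.2) = 0 ∧ ∃ x ∈ X, memOn P D (pairFn x y) Z.1)

/-! ### Conditional subsets of `L⁰_m(E)` associated to measurable sets -/

/-- `L⁰_m(F) = {x ∈ L⁰_m(E) : x ∈ F a.s.}` for a measurable `F ⊆ E`. -/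
def l0mF (P : @Measure Ω mΩ) {E : Type*} [MeasurableSpace E] (F : Set E) : Set (Ω → E) :=
  {x | AEMeasurable x P ∧ ∀ᵐ ω ∂P, x ω ∈ F}

/-- `∑ L⁰_m(F_k)|A_k = {x ∈ L⁰_m(E) : x ∈ F_k a.s. on A_k for all k}`. -/
def l0mConcat (P : @Measure Ω mΩ) {E : Type*} [MeasurableSpace E]
    (A : Partition mΩ P) (F : ℕ → Set E) : Set (Ω → E) :=
  {x | AEMeasurable x P ∧ ∀ k, ∀ᵐ ω ∂P, ω ∈ A.part k → x ω ∈ F k}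

/-- The stable ring `ℛ` on `L⁰_m(E)` generated by a measurable structure on `E`:
all conditional subsets of the form `(∑ L⁰_m(F_k)|A_k)|B`. -/
def ringR (P : @Measure Ω mΩ) (E : Type*) [MeasurableSpace E] : Set (CondRaw Ω E) :=
  {S | ∃ (F : ℕ → Set E) (A : Partition mΩ P) (B : Set Ω),
    (∀ k, MeasurableSet (F k)) ∧ MeasurableSet[mΩ] B ∧
      ceq P S (l0mConcat P A F, B)}

end CondMT

namespace CondMT

section Abstract

variable {α Ω : Type*} {mΩ : MeasurableSpace Ω}

/-- An `L⁰`-valued outer measure on a σ-algebra of subsets of `α`. -/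
structure AbsOuter (P : @Measure Ω mΩ) (G : MeasurableSpace α)
    (m : Set α → Ω → ℝ≥0∞) : Prop where
  meas : ∀ Z, MeasurableSet[G] Z → Measurable (m Z)
  empty : m ∅ =ᵐ[P] fun _ => 0
  mono : ∀ Z W, MeasurableSet[G] Z → MeasurableSet[G] W → Z ⊆ W → m Z ≤ᵐ[P] m W
  sub : ∀ Z : ℕ → Set α, (∀ k, MeasurableSet[G] (Z k)) →
    m (⋃ k, Z k) ≤ᵐ[P] fun ω => ∑' k, m (Z k) ω

/-- Carathéodory measurability for an `L⁰`-valued outer measure. -/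
def AbsCM (P : @Measure Ω mΩ) (G : MeasurableSpace α)
    (m : Set α → Ω → ℝ≥0∞) (Z : Set α) : Prop :=
  ∀ W, MeasurableSet[G] W → (fun ω => m (W ∩ Z) ω + m (W \ Z) ω) =ᵐ[P] m W

variable {P : @Measure Ω mΩ} {G : MeasurableSpace α} {m : Set α → Ω → ℝ≥0∞}

theorem AbsOuter.exists_outer (h : AbsOuter P G m) (B : Set Ω) :
    ∃ O : OuterMeasure α, (∀ Z, MeasurableSet[G] Z → O Z = ∫⁻ ω in B, m Z ω ∂P) ∧
      ∀ Z, O.IsCaratheodory Z ↔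
        ∀ W, MeasurableSet[G] W → O (W ∩ Z) + O (W \ Z) ≤ O W := by
  have m0 : (∫⁻ ω in B, m ∅ ω ∂P) = 0 := by
    rw [lintegral_congr_ae (ae_restrict_of_ae h.empty)]; simp
  have PU : ∀ ⦃f : ℕ → Set α⦄ (_ : ∀ i, MeasurableSet[G] (f i)), MeasurableSet[G] (⋃ i, f i) :=
    fun f hf => MeasurableSet.iUnion hf
  have msU : ∀ ⦃f : ℕ → Set α⦄ (_ : ∀ i, MeasurableSet[G] (f i)),
      (∫⁻ ω in B, m (⋃ i, f i) ω ∂P) ≤ ∑' i, ∫⁻ ω in B, m (f i) ω ∂P := by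
    intro f hf
    rw [← lintegral_tsum fun i => (h.meas _ (hf i)).aemeasurable]
    exact lintegral_mono_ae (ae_restrict_of_ae (h.sub f hf))
  have mono : ∀ ⦃s₁ s₂ : Set α⦄ (_ : MeasurableSet[G] s₁) (_ : MeasurableSet[G] s₂), s₁ ⊆ s₂ →
      (∫⁻ ω in B, m s₁ ω ∂P) ≤ ∫⁻ ω in B, m s₂ ω ∂P := by
    intro s t hs ht hst
    exact lintegral_mono_ae (ae_restrict_of_ae (h.mono s t hs ht hst))
  refine ⟨inducedOuterMeasure (P := fun Z => MeasurableSet[G] Z)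
    (fun Z _ => ∫⁻ ω in B, m Z ω ∂P) (@MeasurableSet.empty _ G) m0, ?_, ?_⟩
  · intro Z hZ
    exact inducedOuterMeasure_eq' (P := fun Z => MeasurableSet[G] Z)
      (m := fun Z _ => ∫⁻ ω in B, m Z ω ∂P) PU msU mono hZ
  · intro Z
    exact inducedOuterMeasure_caratheodory (P := fun Z => MeasurableSet[G] Z)
      (m := fun Z _ => ∫⁻ ω in B, m Z ω ∂P) PU msU mono Z

/-- The scalar outer measure `Z ↦ ∫_B m Z dP`. -/
def AbsOuter.O (h : AbsOuter P G m) (B : Set Ω) : OuterMeasure α := (h.exists_outer B).choose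

theorem AbsOuter.O_eq (h : AbsOuter P G m) (B : Set Ω) {Z : Set α} (hZ : MeasurableSet[G] Z) :
    h.O B Z = ∫⁻ ω in B, m Z ω ∂P := (h.exists_outer B).choose_spec.1 Z hZ

theorem AbsOuter.O_cara (h : AbsOuter P G m) (B : Set Ω) {Z : Set α} :
    (h.O B).IsCaratheodory Z ↔
        ∀ W, MeasurableSet[G] W → h.O B (W ∩ Z) + h.O B (W \ Z) ≤ h.O B W :=
  (h.exists_outer B).choose_spec.2 Z

theorem AbsOuter.cm_iff [IsProbabilityMeasure P] (h : AbsOuter P G m) {Z : Set α}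
    (hZ : MeasurableSet[G] Z) :
    AbsCM P G m Z ↔ ∀ B, MeasurableSet B → (h.O B).IsCaratheodory Z := by
  constructor
  · intro hc B _
    rw [h.O_cara]
    intro W hW
    rw [h.O_eq B hW, h.O_eq B (hW.inter hZ), h.O_eq B (hW.diff hZ),
      ← lintegral_add_left (h.meas _ (hW.inter hZ))]
    exact (lintegral_congr_ae (ae_restrict_of_ae (hc W hW))).le
  · intro hc W hW
    refine ae_eq_of_forall_setLIntegral_eq_of_sigmaFinite
      ((h.meas _ (hW.inter hZ)).add (h.meas _ (hW.diff hZ))) (h.meas _ hW) ?_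
    intro B hB _
    have := hc B hB W
    rw [h.O_eq B hW, h.O_eq B (hW.inter hZ), h.O_eq B (hW.diff hZ),
      ← lintegral_add_left (h.meas _ (hW.inter hZ))] at this
    exact this.symm

theorem AbsOuter.cm_compl [IsProbabilityMeasure P] (h : AbsOuter P G m) {Z : Set α}
    (hZ : MeasurableSet[G] Z) (hc : AbsCM P G m Z) : AbsCM P G m Zᶜ := by
  rw [h.cm_iff hZ] at hc
  rw [h.cm_iff hZ.compl]
  exact fun B hB => OuterMeasure.isCaratheodory_compl _ (hc B hB)

theorem AbsOuter.cm_inter [IsProbabilityMeasure P] (h : AbsOuter P G m) {Z W : Set α}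
    (hZ : MeasurableSet[G] Z) (hW : MeasurableSet[G] W)
    (hc : AbsCM P G m Z) (hd : AbsCM P G m W) : AbsCM P G m (Z ∩ W) := by
  rw [h.cm_iff hZ] at hc
  rw [h.cm_iff hW] at hd
  rw [h.cm_iff (hZ.inter hW)]
  exact fun B hB => OuterMeasure.isCaratheodory_inter _ (hc B hB) (hd B hB)

theorem AbsOuter.cm_iUnion [IsProbabilityMeasure P] (h : AbsOuter P G m) {Z : ℕ → Set α}
    (hZ : ∀ k, MeasurableSet[G] (Z k))
    (hc : ∀ k, AbsCM P G m (Z k)) : AbsCM P G m (⋃ k, Z k) := by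
  rw [h.cm_iff (MeasurableSet.iUnion hZ)]
  exact fun B hB => OuterMeasure.isCaratheodory_iUnion _
    fun k => (h.cm_iff (hZ k)).1 (hc k) B hB

theorem AbsOuter.cm_univ (h : AbsOuter P G m) : AbsCM P G m univ := by
  intro W _
  filter_upwards [h.empty] with ω hω
  simp [hω]

theorem AbsOuter.tsum [IsProbabilityMeasure P] (h : AbsOuter P G m) {Z : ℕ → Set α}
    (hZ : ∀ k, MeasurableSet[G] (Z k)) (hc : ∀ k, AbsCM P G m (Z k))
    (hd : ∀ i j, i ≠ j → m (Z i ∩ Z j) =ᵐ[P] fun _ => 0) :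
    m (⋃ k, Z k) =ᵐ[P] fun ω => ∑' k, m (Z k) ω := by
  refine ae_eq_of_forall_setLIntegral_eq_of_sigmaFinite
      (h.meas _ (MeasurableSet.iUnion hZ)) (Measurable.tsum fun k => h.meas _ (hZ k)) ?_
  intro B hB _
  rw [lintegral_tsum fun i => (h.meas _ (hZ i)).aemeasurable,
    ← h.O_eq B (MeasurableSet.iUnion hZ)]
  simp_rw [← h.O_eq B (hZ _)]
  let _ : MeasurableSpace α := (h.O B).caratheodory
  have hca : ∀ k, MeasurableSet[(h.O B).caratheodory] (Z k) :=
    fun k => (h.cm_iff (hZ k)).1 (hc k) B hB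
  have key := measure_iUnion₀ (μ := (h.O B).toMeasure le_rfl) (f := Z) ?_
    (fun i => (hca i).nullMeasurableSet)
  · rw [toMeasure_apply _ _ (MeasurableSet.iUnion hca)] at key
    rw [key]
    exact tsum_congr fun k => toMeasure_apply _ _ (hca k)
  · intro i j hij
    change (h.O B).toMeasure le_rfl (Z i ∩ Z j) = 0
    rw [toMeasure_apply _ _ ((hca i).inter (hca j)), h.O_eq B ((hZ i).inter (hZ j)),
      lintegral_congr_ae (ae_restrict_of_ae (hd i j hij))]
    simp

end Abstract

section Basic

variable {Ω E : Type*} {mΩ : MeasurableSpace Ω} {P : @Measure Ω mΩ}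

/-- Almost sure inclusion of sets. -/
def ale (P : @Measure Ω mΩ) (A B : Set Ω) : Prop := ∀ᵐ ω ∂P, ω ∈ A → ω ∈ B

theorem ale_iff {A B : Set Ω} : P (A \ B) = 0 ↔ ale P A B := by
  rw [← ae_le_set]; rfl

theorem ale.trans {A B C : Set Ω} (h : ale P A B) (h' : ale P B C) : ale P A C := by
  filter_upwards [h, h'] with ω a b c using b (a c)

theorem ale_of_subset {A B : Set Ω} (h : A ⊆ B) : ale P A B := Eventually.of_forall fun _ a => h a

theorem Partition.good (A : Partition mΩ P) :
    ∀ᵐ ω ∂P, (∃ k, ω ∈ A.part k) ∧ ∀ i j, ω ∈ A.part i → ω ∈ A.part j → i = j := by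
  have h1 : ∀ᵐ ω ∂P, ω ∈ ⋃ k, A.part k := by
    rw [ae_iff]; exact A.cover
  have h2 : ∀ i j, ∀ᵐ ω ∂P, ω ∈ A.part i → ω ∈ A.part j → i = j := by
    intro i j
    by_cases hij : i = j
    · exact Eventually.of_forall fun _ _ _ => hij
    · rw [ae_iff]
      convert A.disj i j hij using 2
      ext ω; simp [hij]
  filter_upwards [h1, ae_all_iff.2 fun i => ae_all_iff.2 (h2 i)] with ω a b
  exact ⟨mem_iUnion.1 a, b⟩

theorem concat_eq {F : Type*} (A : Partition mΩ P) (x : ℕ → Ω → F) :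
    ∀ᵐ ω ∂P, ∀ k, ω ∈ A.part k → A.concat x ω = x k ω := by
  classical
  filter_upwards [A.good] with ω h k hk
  have hex : ∃ k, ω ∈ A.part k := ⟨k, hk⟩
  have := h.2 _ _ (Nat.find_spec hex) hk
  simp only [Partition.concat, dif_pos hex]
  rw [← this]

/-- The partition generated by a sequence of measurable sets. -/
def gluePart (P : @Measure Ω mΩ) (C : ℕ → Set Ω) (hC : ∀ k, MeasurableSet (C k)) :
    Partition mΩ P where
  part k := Nat.casesOn k (⋃ k, disjointed C k)ᶜ (fun k => disjointed C k)
  meas k := by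
    cases k with
    | zero => exact (MeasurableSet.iUnion fun k => MeasurableSet.disjointed hC k).compl
    | succ k => exact MeasurableSet.disjointed hC k
  disj i j hij := by
    have hd : ∀ i j, i ≠ j → disjointed C i ∩ disjointed C j = ∅ := fun i j h =>
      (disjoint_disjointed C h).inter_eq
    have h0 : ∀ i, disjointed C i ∩ (⋃ k, disjointed C k)ᶜ = ∅ := by
      intro i
      ext ω
      simp only [mem_inter_iff, mem_compl_iff, mem_iUnion, mem_empty_iff_false, iff_false]
      exact fun h => h.2 ⟨i, h.1⟩
    cases i with
    | zero =>
      cases j with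
      | zero => exact absurd rfl hij
      | succ j => change P ((⋃ k, disjointed C k)ᶜ ∩ disjointed C j) = 0
                  rw [inter_comm, h0, measure_empty]
    | succ i =>
      cases j with
      | zero => change P (disjointed C i ∩ (⋃ k, disjointed C k)ᶜ) = 0
                rw [h0, measure_empty]
      | succ j => change P (disjointed C i ∩ disjointed C j) = 0
                  rw [hd i j (by omega), measure_empty]
  cover := by
    convert measure_empty (μ := P)
    ext ω
    simp only [mem_compl_iff, mem_iUnion, mem_empty_iff_false, iff_false, not_not]
    by_cases h : ∃ k, ω ∈ disjointed C k
    · obtain ⟨k, hk⟩ := h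
      exact ⟨k + 1, hk⟩
    · refine ⟨0, ?_⟩
      change ω ∈ (⋃ k, disjointed C k)ᶜ
      simpa using h

/-- Gluing of a sequence of elements of a stable set. -/
theorem Stable.glue {V : Set (Ω → E)} (hV : Stable P V) (C : ℕ → Set Ω)
    (hC : ∀ k, MeasurableSet (C k)) (x : ℕ → Ω → E) (hx : ∀ k, x k ∈ V) :
    ∃ y ∈ V, ∀ᵐ ω ∂P, ∀ k, ω ∈ disjointed C k → y ω = x k ω := by
  let x' : ℕ → Ω → E := fun k => Nat.casesOn k (x 0) x
  refine ⟨(gluePart P C hC).concat x', hV.2.2 _ _ ?_, ?_⟩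
  · intro k
    cases k with
    | zero => exact hx 0
    | succ k => exact hx k
  · filter_upwards [concat_eq (gluePart P C hC) x'] with ω h k hk
    exact h (k + 1) hk

theorem mem_disjointed {C : ℕ → Set Ω} {ω : Ω} (h : ω ∈ ⋃ k, C k) :
    ∃ k, ω ∈ disjointed C k := by
  rw [← iUnion_disjointed] at h
  exact mem_iUnion.1 h

/-- Gluing of two elements of a stable set. -/
theorem Stable.glue₂ {V : Set (Ω → E)} (hV : Stable P V) (C : Set Ω)
    (hC : MeasurableSet C) (x y : Ω → E) (hx : x ∈ V) (hy : y ∈ V) :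
    ∃ z ∈ V, ∀ᵐ ω ∂P, (ω ∈ C → z ω = x ω) ∧ (ω ∉ C → z ω = y ω) := by
  obtain ⟨z, hz, h⟩ := hV.glue (fun k => if k = 0 then C else univ)
    (fun k => by split_ifs <;> simp [hC]) (fun k => if k = 0 then x else y)
    (fun k => by split_ifs <;> assumption)
  refine ⟨z, hz, ?_⟩
  filter_upwards [h] with ω h
  constructor
  · intro hω
    simpa using h 0 (by simpa [disjointed_zero] using hω)
  · intro hω
    obtain ⟨k, hk⟩ := mem_disjointed (C := fun k => if k = 0 then C else univ) (ω := ω)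
      (mem_iUnion.2 ⟨1, by simp⟩)
    have hk0 : k ≠ 0 := by
      rintro rfl
      have := disjointed_subset _ _ hk
      simp at this
      exact hω this
    simpa [hk0] using h k hk

theorem exists_largest [IsProbabilityMeasure P] (Φ : Set Ω → Prop) (h0 : Φ ∅)
    (hU : ∀ C : ℕ → Set Ω, (∀ k, MeasurableSet (C k)) → (∀ k, Φ (C k)) → Φ (⋃ k, C k)) :
    ∃ C, MeasurableSet C ∧ Φ C ∧ ∀ C', MeasurableSet C' → Φ C' → P (C' \ C) = 0 := by
  let S : Set ℝ≥0∞ := {r | ∃ C, MeasurableSet C ∧ Φ C ∧ P C = r}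
  obtain ⟨u, -, hu, huS⟩ := exists_seq_tendsto_sSup (S := S) ⟨_, ∅, MeasurableSet.empty, h0, rfl⟩
    (OrderTop.bddAbove S)
  choose C hCm hCΦ hCu using huS
  refine ⟨⋃ k, C k, MeasurableSet.iUnion hCm, hU C hCm hCΦ, ?_⟩
  intro C' hC' hΦ'
  have hge : sSup S ≤ P (⋃ k, C k) := by
    refine le_of_tendsto' hu fun k => ?_
    rw [← hCu k]
    exact measure_mono (subset_iUnion C k)
  let D : ℕ → Set Ω := fun k => Nat.casesOn k C' C
  have hDm : ∀ k, MeasurableSet (D k) := by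
    intro k; cases k with
    | zero => exact hC'
    | succ k => exact hCm k
  have hDΦ : ∀ k, Φ (D k) := by
    intro k; cases k with
    | zero => exact hΦ'
    | succ k => exact hCΦ k
  have hle : P (⋃ k, D k) ≤ sSup S := le_sSup ⟨_, MeasurableSet.iUnion hDm, hU D hDm hDΦ, rfl⟩
  have hsub : (⋃ k, C k) ⊆ ⋃ k, D k := iUnion_subset fun k => subset_iUnion D (k + 1)
  have hdiff : P ((⋃ k, D k) \ ⋃ k, C k) = 0 := by
    rw [measure_sdiff hsub (MeasurableSet.iUnion hCm).nullMeasurableSet (measure_ne_top _ _)]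
    exact tsub_eq_zero_of_le (hle.trans hge)
  exact measure_mono_null (sdiff_subset_sdiff_left (subset_iUnion D 0)) hdiff

end Basic

end CondMT

namespace CondMT

section Corr

variable {Ω E : Type*} {mΩ : MeasurableSpace Ω} {P : @Measure Ω mΩ} {X : Set (Ω → E)}

/-- The σ-algebra of extensional subsets of `X × Ω`. -/
def extSig (P : @Measure Ω mΩ) (X : Set (Ω → E)) : MeasurableSpace ((Ω → E) × Ω) where
  MeasurableSet' Z := (∀ x ∈ X, MeasurableSet {ω | (x, ω) ∈ Z}) ∧
    ∀ x ∈ X, ∀ y ∈ X, ∀ C, MeasurableSet C → (∀ᵐ ω ∂P, ω ∈ C → x ω = y ω) →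
      ∀ᵐ ω ∂P, ω ∈ C → (x, ω) ∈ Z → (y, ω) ∈ Z
  measurableSet_empty := by simp
  measurableSet_compl Z hZ := by
    refine ⟨fun x hx => (hZ.1 x hx).compl, fun x hx y hy C hC h => ?_⟩
    have h' : ∀ᵐ ω ∂P, ω ∈ C → y ω = x ω := by
      filter_upwards [h] with ω a b using (a b).symm
    filter_upwards [hZ.2 y hy x hx C hC h'] with ω a b c d using c (a b d)
  measurableSet_iUnion Z hZ := by
    refine ⟨fun x hx => ?_, fun x hx y hy C hC h => ?_⟩
    · have : {ω | (x, ω) ∈ ⋃ i, Z i} = ⋃ i, {ω | (x, ω) ∈ Z i} := by ext; simp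
      rw [this]
      exact MeasurableSet.iUnion fun i => (hZ i).1 x hx
    · filter_upwards [ae_all_iff.2 fun i => (hZ i).2 x hx y hy C hC h] with ω a b c
      obtain ⟨i, hi⟩ := mem_iUnion.1 c
      exact mem_iUnion.2 ⟨i, a i b hi⟩

theorem extSig_sec {Z : Set ((Ω → E) × Ω)} (hZ : MeasurableSet[extSig P X] Z) {x : Ω → E}
    (hx : x ∈ X) : MeasurableSet {ω | (x, ω) ∈ Z} := hZ.1 x hx

theorem extSig_ext {Z : Set ((Ω → E) × Ω)} (hZ : MeasurableSet[extSig P X] Z) {x y : Ω → E}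
    (hx : x ∈ X) (hy : y ∈ X) {C : Set Ω} (hC : MeasurableSet C)
    (h : ∀ᵐ ω ∂P, ω ∈ C → x ω = y ω) :
    ∀ᵐ ω ∂P, ω ∈ C → (x, ω) ∈ Z → (y, ω) ∈ Z := hZ.2 x hx y hy C hC h

/-- The truth values of membership in the conditional set `S`. -/
def zset (P : @Measure Ω mΩ) (S : CondRaw Ω E) : Set ((Ω → E) × Ω) :=
  {p | p.2 ∈ indBase P S p.1}

/-- Almost sure sectionwise inclusion. -/
def zle (P : @Measure Ω mΩ) (X : Set (Ω → E)) (Z W : Set ((Ω → E) × Ω)) : Prop :=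
  ∀ x ∈ X, ∀ᵐ ω ∂P, (x, ω) ∈ Z → (x, ω) ∈ W

/-- Almost sure sectionwise equality. -/
def zeq (P : @Measure Ω mΩ) (X : Set (Ω → E)) (Z W : Set ((Ω → E) × Ω)) : Prop :=
  ∀ x ∈ X, ∀ᵐ ω ∂P, (x, ω) ∈ Z ↔ (x, ω) ∈ W

theorem zeq.symm {Z W : Set ((Ω → E) × Ω)} (h : zeq P X Z W) : zeq P X W Z := by
  intro x hx; filter_upwards [h x hx] with ω a using a.symm

theorem zeq.trans {Z W U : Set ((Ω → E) × Ω)} (h : zeq P X Z W) (h' : zeq P X W U) :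
    zeq P X Z U := by
  intro x hx; filter_upwards [h x hx, h' x hx] with ω a b using a.trans b

theorem zeq.le {Z W : Set ((Ω → E) × Ω)} (h : zeq P X Z W) : zle P X Z W := by
  intro x hx; filter_upwards [h x hx] with ω a using a.1

theorem zle.trans {Z W U : Set ((Ω → E) × Ω)} (h : zle P X Z W) (h' : zle P X W U) :
    zle P X Z U := by
  intro x hx; filter_upwards [h x hx, h' x hx] with ω a b c using b (a c)

theorem zle.antisymm {Z W : Set ((Ω → E) × Ω)} (h : zle P X Z W) (h' : zle P X W Z) :
    zeq P X Z W := by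
  intro x hx; filter_upwards [h x hx, h' x hx] with ω a b using ⟨a, b⟩

theorem zeq.inter {Z W Z' W' : Set ((Ω → E) × Ω)} (h : zeq P X Z W) (h' : zeq P X Z' W') :
    zeq P X (Z ∩ Z') (W ∩ W') := by
  intro x hx; filter_upwards [h x hx, h' x hx] with ω a b using and_congr a b

theorem zeq.compl {Z W : Set ((Ω → E) × Ω)} (h : zeq P X Z W) : zeq P X Zᶜ Wᶜ := by
  intro x hx; filter_upwards [h x hx] with ω a using not_congr a

theorem zeq.refl (Z : Set ((Ω → E) × Ω)) : zeq P X Z Z :=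
  fun _ _ => Eventually.of_forall fun _ => Iff.rfl

theorem zle_of_subset {Z W : Set ((Ω → E) × Ω)} (h : Z ⊆ W) : zle P X Z W :=
  fun _ _ => Eventually.of_forall fun _ a => h a

variable [IsProbabilityMeasure P]

theorem indBase_spec {S : CondRaw Ω E} (hS : IsCond P X S) (x : Ω → E) :
    MeasurableSet (indBase P S x) ∧ (ale P (indBase P S x) S.2 ∧ memOn P (indBase P S x) x S.1) ∧
      ∀ C, MeasurableSet C → ale P C S.2 → memOn P C x S.1 → ale P C (indBase P S x) := by
  have hex : ∃ C, MeasurableSet[mΩ] C ∧ (P (C \ S.2) = 0 ∧ memOn P C x S.1) ∧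
      ∀ C', MeasurableSet[mΩ] C' → (P (C' \ S.2) = 0 ∧ memOn P C' x S.1) → P (C' \ C) = 0 := by
    refine exists_largest (fun C => P (C \ S.2) = 0 ∧ memOn P C x S.1) ?_ ?_
    · obtain ⟨v, hv⟩ := hS.1.1
      exact ⟨by simp, v, hv, by simp⟩
    · intro C hC hΦ
      refine ⟨?_, ?_⟩
      · rw [iUnion_sdiff]
        exact measure_iUnion_null fun k => (hΦ k).1
      · choose y hy hxy using fun k => (hΦ k).2
        obtain ⟨z, hz, h⟩ := hS.1.glue C hC y hy
        refine ⟨z, hz, ?_⟩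
        filter_upwards [h, ae_all_iff.2 hxy] with ω a b c
        obtain ⟨k, hk⟩ := mem_disjointed c
        rw [a k hk, b k (disjointed_subset _ _ hk)]
  have := hex.choose_spec
  have e : indBase P S x = hex.choose := by
    unfold indBase largestSet
    exact dif_pos hex
  rw [e]
  refine ⟨this.1, ⟨ale_iff.1 this.2.1.1, this.2.1.2⟩, fun C hC h1 h2 => ?_⟩
  exact ale_iff.1 (this.2.2 C hC ⟨ale_iff.2 h1, h2⟩)

theorem zset_meas {S : CondRaw Ω E} (hS : IsCond P X S) : MeasurableSet[extSig P X] (zset P S) := by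
  refine ⟨fun x _ => (indBase_spec hS x).1, fun x hx y hy C hC h => ?_⟩
  obtain ⟨hm, ⟨h1, v, hv, hxv⟩, -⟩ := indBase_spec hS x
  have := (indBase_spec hS y).2.2 (C ∩ indBase P S x) (hC.inter hm)
    ((ale_of_subset inter_subset_right).trans h1) ⟨v, hv, by
      filter_upwards [hxv, h] with ω a b c
      rw [← a c.2, b c.1]⟩
  filter_upwards [this] with ω a b c using a ⟨b, c⟩

theorem cle_iff {S T : CondRaw Ω E} (hS : IsCond P X S) (hT : IsCond P X T) :
    cle P S T ↔ zle P X (zset P S) (zset P T) := by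
  constructor
  · intro h x hx
    obtain ⟨hm, ⟨h1, v, hv, hxv⟩, -⟩ := indBase_spec hS x
    obtain ⟨w, hw, hvw⟩ := h.2 v hv
    refine (indBase_spec hT x).2.2 _ hm (h1.trans (ale_iff.1 h.1)) ⟨w, hw, ?_⟩
    filter_upwards [hxv, hvw, h1] with ω a b c d
    rw [a d, b (c d)]
  · intro h
    have key : ∀ x ∈ S.1, ale P S.2 (indBase P T x) := by
      intro x hx
      refine ale.trans ((indBase_spec hS x).2.2 _ hS.2.2 (ale_of_subset subset_rfl)
        ⟨x, hx, by simp⟩) (h x (hS.2.1 hx))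
    refine ⟨?_, fun x hx => ?_⟩
    · obtain ⟨v, hv⟩ := hS.1.1
      exact ale_iff.2 ((key v hv).trans (indBase_spec hT v).2.1.1)
    · obtain ⟨w, hw, hxw⟩ := (indBase_spec hT x).2.1.2
      refine ⟨w, hw, ?_⟩
      filter_upwards [hxw, key x hx] with ω a b c using a (b c)

theorem ceq_iff {S T : CondRaw Ω E} (hS : IsCond P X S) (hT : IsCond P X T) :
    ceq P S T ↔ zeq P X (zset P S) (zset P T) := by
  unfold ceq
  rw [cle_iff hS hT, cle_iff hT hS]
  exact ⟨fun h => h.1.antisymm h.2, fun h => ⟨h.le, h.symm.le⟩⟩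

theorem exists_mk (hX : Stable P X) {Z : Set ((Ω → E) × Ω)} (hZ : MeasurableSet[extSig P X] Z) :
    ∃ S, IsCond P X S ∧ zeq P X (zset P S) Z := by
  obtain ⟨A, hA, ⟨x₀, hx₀, hAx₀⟩, hmax⟩ := exists_largest (P := P)
    (fun C => ∃ x ∈ X, ale P C {ω | (x, ω) ∈ Z}) (by
      obtain ⟨x, hx⟩ := hX.1
      exact ⟨x, hx, by simp [ale]⟩) (by
      intro C hC hΦ
      choose x hx hCx using hΦ
      obtain ⟨y, hy, h⟩ := hX.glue C hC x hx
      refine ⟨y, hy, ?_⟩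
      have h2 : ∀ k, ∀ᵐ ω ∂P, ω ∈ disjointed C k → (x k, ω) ∈ Z → (y, ω) ∈ Z := by
        intro k
        refine extSig_ext hZ (hx k) hy (MeasurableSet.disjointed hC k) ?_
        filter_upwards [h] with ω a b using (a k b).symm
      filter_upwards [ae_all_iff.2 h2, ae_all_iff.2 hCx] with ω a b c
      obtain ⟨k, hk⟩ := mem_disjointed c
      exact a k hk (b k (disjointed_subset _ _ hk)))
  have hle : ∀ x ∈ X, ale P {ω | (x, ω) ∈ Z} A := fun x hx =>
    ale_iff.1 (hmax _ (extSig_sec hZ hx) ⟨x, hx, ale_of_subset subset_rfl⟩)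
  have hcond : IsCond P X ({x | x ∈ X ∧ ale P A {ω | (x, ω) ∈ Z}}, A) := by
    refine ⟨⟨⟨x₀, hx₀, hAx₀⟩, ?_, ?_⟩, fun x hx => hx.1, hA⟩
    · rintro x ⟨hx, hAx⟩ y hxy
      have hy := hX.2.1 x hx y hxy
      refine ⟨hy, ?_⟩
      have := extSig_ext hZ hx hy MeasurableSet.univ (by
        filter_upwards [hxy] with ω a _ using a)
      filter_upwards [this, hAx] with ω a b c using a trivial (b c)
    · intro B x hx
      have hy : B.concat x ∈ X := hX.2.2 B x fun k => (hx k).1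
      refine ⟨hy, ?_⟩
      have h2 : ∀ k, ∀ᵐ ω ∂P, ω ∈ B.part k → (x k, ω) ∈ Z → (B.concat x, ω) ∈ Z := by
        intro k
        refine extSig_ext hZ (hx k).1 hy (B.meas k) ?_
        filter_upwards [concat_eq B x] with ω a b using (a k b).symm
      filter_upwards [ae_all_iff.2 h2, B.good, ae_all_iff.2 fun k => (hx k).2] with ω a b c d
      obtain ⟨k, hk⟩ := b.1
      exact a k hk (c k d)
  refine ⟨_, hcond, zle.antisymm ?_ ?_⟩
  · intro x hx
    obtain ⟨hm, ⟨h1, v, hv, hxv⟩, -⟩ := indBase_spec hcond x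
    have := extSig_ext hZ hv.1 hx hm (by filter_upwards [hxv] with ω a b using (a b).symm)
    filter_upwards [this, h1, hv.2] with ω a b c d
    exact a d (c (b d))
  · intro x hx
    obtain ⟨z, hz, h⟩ := hX.glue₂ {ω | (x, ω) ∈ Z} (extSig_sec hZ hx) x x₀ hx hx₀
    refine (indBase_spec hcond x).2.2 _ (extSig_sec hZ hx) (hle x hx) ⟨z, ⟨hz, ?_⟩, ?_⟩
    · have e1 := extSig_ext hZ hx hz (extSig_sec hZ hx)
        (by filter_upwards [h] with ω a b using (a.1 b).symm)
      have e2 := extSig_ext hZ hx₀ hz (extSig_sec hZ hx).compl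
        (by filter_upwards [h] with ω a b using (a.2 b).symm)
      filter_upwards [e1, e2, hAx₀] with ω a b c d
      by_cases hω : (x, ω) ∈ Z
      · exact a hω hω
      · exact b hω (c d)
    · filter_upwards [h] with ω a b using (a.1 b).symm

open Classical in
/-- The conditional set with the given truth values. -/
def mkc (P : @Measure Ω mΩ) (X : Set (Ω → E)) (Z : Set ((Ω → E) × Ω)) : CondRaw Ω E :=
  if h : ∃ S, IsCond P X S ∧ zeq P X (zset P S) Z then h.choose else ctop X

theorem mkc_spec (hX : Stable P X) {Z : Set ((Ω → E) × Ω)} (hZ : MeasurableSet[extSig P X] Z) :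
    IsCond P X (mkc P X Z) ∧ zeq P X (zset P (mkc P X Z)) Z := by
  have h := exists_mk hX hZ
  unfold mkc
  rw [dif_pos h]
  exact h.choose_spec

theorem sup_spec {s : Set (CondRaw Ω E)} {a : CondRaw Ω E} (ha : IsSupOf P X s a) :
    IsCond P X (cSup P X s) ∧ zeq P X (zset P (cSup P X s)) (zset P a) := by
  have h : ∃ a, IsSupOf P X s a := ⟨a, ha⟩
  have hs : IsSupOf P X s (cSup P X s) := by
    unfold cSup
    rw [dif_pos h]
    exact h.choose_spec
  exact ⟨hs.1, (ceq_iff hs.1 ha.1).1 ⟨hs.2.2 a ha.1 ha.2.1, ha.2.2 _ hs.1 hs.2.1⟩⟩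

theorem inf_spec {s : Set (CondRaw Ω E)} {a : CondRaw Ω E} (ha : IsInfOf P X s a) :
    IsCond P X (cInf P X s) ∧ zeq P X (zset P (cInf P X s)) (zset P a) := by
  have h : ∃ a, IsInfOf P X s a := ⟨a, ha⟩
  have hs : IsInfOf P X s (cInf P X s) := by
    unfold cInf
    rw [dif_pos h]
    exact h.choose_spec
  exact ⟨hs.1, (ceq_iff hs.1 ha.1).1 ⟨ha.2.2 _ hs.1 hs.2.1, hs.2.2 a ha.1 ha.2.1⟩⟩

theorem cInf₂_spec (hX : Stable P X) {S T : CondRaw Ω E} (hS : IsCond P X S)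
    (hT : IsCond P X T) :
    IsCond P X (cInf₂ P X S T) ∧ zeq P X (zset P (cInf₂ P X S T)) (zset P S ∩ zset P T) := by
  obtain ⟨h1, h2⟩ := mkc_spec hX ((zset_meas hS).inter (zset_meas hT))
  have : IsInfOf P X {S, T} (mkc P X (zset P S ∩ zset P T)) := by
    refine ⟨h1, ?_, ?_⟩
    · rintro b (rfl | rfl)
      · exact (cle_iff h1 hS).2 (h2.le.trans (zle_of_subset inter_subset_left))
      · exact (cle_iff h1 hT).2 (h2.le.trans (zle_of_subset inter_subset_right))
    · intro c hc hb
      refine (cle_iff hc h1).2 (zle.trans ?_ h2.symm.le)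
      intro x hx
      filter_upwards [(cle_iff hc hS).1 (hb S (by simp)) x hx,
        (cle_iff hc hT).1 (hb T (by simp)) x hx] with ω a b c using ⟨a c, b c⟩
  exact ⟨(inf_spec this).1, (inf_spec this).2.trans h2⟩

theorem cSupFam_spec (hX : Stable P X) {S : ℕ → CondRaw Ω E} (hS : ∀ k, IsCond P X (S k)) :
    IsCond P X (cSupFam P X S) ∧ zeq P X (zset P (cSupFam P X S)) (⋃ k, zset P (S k)) := by
  obtain ⟨h1, h2⟩ := mkc_spec hX (MeasurableSet.iUnion fun k => zset_meas (hS k))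
  have : IsSupOf P X (range S) (mkc P X (⋃ k, zset P (S k))) := by
    refine ⟨h1, ?_, ?_⟩
    · rintro b ⟨k, rfl⟩
      exact (cle_iff (hS k) h1).2
        ((zle_of_subset (subset_iUnion (fun k => zset P (S k)) k)).trans h2.symm.le)
    · intro c hc hb
      refine (cle_iff h1 hc).2 (h2.le.trans ?_)
      intro x hx
      filter_upwards [ae_all_iff.2 fun k => (cle_iff (hS k) hc).1 (hb _ ⟨k, rfl⟩) x hx]
        with ω a b
      obtain ⟨k, hk⟩ := mem_iUnion.1 b
      exact a k hk
  exact ⟨(sup_spec this).1, (sup_spec this).2.trans h2⟩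

theorem cbot_cond (hX : Stable P X) : IsCond P X (cbot X) :=
  ⟨hX, subset_rfl, MeasurableSet.empty⟩

theorem ctop_cond (hX : Stable P X) : IsCond P X (ctop X) :=
  ⟨hX, subset_rfl, MeasurableSet.univ⟩

theorem zset_cbot (hX : Stable P X) : zeq P X (zset P (cbot X)) ∅ := by
  intro x _
  filter_upwards [(indBase_spec (cbot_cond hX) x).2.1.1] with ω a
  exact ⟨fun h => (a h).elim, fun h => h.elim⟩

theorem zset_ctop (hX : Stable P X) : zeq P X (zset P (ctop X)) univ := by
  intro x hx
  filter_upwards [(indBase_spec (ctop_cond hX) x).2.2 univ MeasurableSet.univ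
    (ale_of_subset subset_rfl) ⟨x, hx, by simp⟩] with ω a
  exact ⟨fun _ => trivial, fun _ => a trivial⟩

theorem cdisjoint_iff (hX : Stable P X) {S T : CondRaw Ω E} (hS : IsCond P X S)
    (hT : IsCond P X T) : cdisjoint P X S T ↔ zeq P X (zset P S ∩ zset P T) ∅ := by
  obtain ⟨h1, h2⟩ := cInf₂_spec hX hS hT
  unfold cdisjoint
  rw [ceq_iff h1 (cbot_cond hX)]
  exact ⟨fun h => h2.symm.trans (h.trans (zset_cbot hX)),
    fun h => h2.trans (h.trans (zset_cbot hX).symm)⟩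

theorem ccompl_spec (hX : Stable P X) {S : CondRaw Ω E} (hS : IsCond P X S) :
    IsCond P X (ccompl P X S) ∧ zeq P X (zset P (ccompl P X S)) (zset P S)ᶜ := by
  obtain ⟨h1, h2⟩ := mkc_spec hX (zset_meas hS).compl
  have : IsSupOf P X {b | IsCond P X b ∧ cdisjoint P X b S} (mkc P X (zset P S)ᶜ) := by
    refine ⟨h1, ?_, ?_⟩
    · rintro b ⟨hb, hd⟩
      rw [cdisjoint_iff hX hb hS] at hd
      refine (cle_iff hb h1).2 (zle.trans ?_ h2.symm.le)
      intro x hx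
      filter_upwards [hd x hx] with ω a b c using a.1 ⟨b, c⟩
    · intro c _ hb
      refine hb _ ⟨h1, ?_⟩
      rw [cdisjoint_iff hX h1 hS]
      intro x hx
      filter_upwards [h2 x hx] with ω a
      exact ⟨fun b => a.1 b.1 b.2, fun b => b.elim⟩
  exact ⟨(sup_spec this).1, (sup_spec this).2.trans h2⟩

theorem crestrict_spec {S : CondRaw Ω E} (hS : IsCond P X S) {B : Set Ω} (hB : MeasurableSet B) :
    IsCond P X (crestrict S B) ∧
      zeq P X (zset P (crestrict S B)) (zset P S ∩ {p | p.2 ∈ B}) := by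
  have hc : IsCond P X (crestrict S B) := ⟨hS.1, hS.2.1, hS.2.2.inter hB⟩
  refine ⟨hc, zle.antisymm ?_ ?_⟩
  · intro x _
    obtain ⟨hm, ⟨h1, h2⟩, -⟩ := indBase_spec hc x
    filter_upwards [h1, (indBase_spec hS x).2.2 _ hm
      (h1.trans (ale_of_subset inter_subset_left)) h2] with ω a b c
    exact ⟨b c, (a c).2⟩
  · intro x _
    obtain ⟨hm, ⟨h1, v, hv, hxv⟩, -⟩ := indBase_spec hS x
    refine (indBase_spec hc x).2.2 (indBase P S x ∩ B) (hm.inter hB) ?_ ⟨v, hv, ?_⟩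
    · filter_upwards [h1] with ω a b using ⟨a b.1, b.2⟩
    · filter_upwards [hxv] with ω a b using a b.1

theorem base_meas {B : Set Ω} (hB : MeasurableSet B) :
    MeasurableSet[extSig P X] {p : (Ω → E) × Ω | p.2 ∈ B} :=
  ⟨fun _ _ => hB, fun _ _ _ _ _ _ _ => Eventually.of_forall fun _ _ h => h⟩

theorem mem_concatSet {A : Partition mΩ P} {V : ℕ → Set (Ω → E)} {f : Ω → E} :
    f ∈ concatSet P A V ↔ ∀ k, ∃ y ∈ V k, ∀ᵐ ω ∂P, ω ∈ A.part k → f ω = y ω := by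
  constructor
  · rintro ⟨x, hx, h⟩ k
    refine ⟨x k, hx k, ?_⟩
    filter_upwards [h, concat_eq A x] with ω a b c
    rw [a, b k c]
  · intro h
    choose y hy hfy using h
    refine ⟨y, hy, ?_⟩
    filter_upwards [A.good, concat_eq A y, ae_all_iff.2 hfy] with ω a b c
    obtain ⟨k, hk⟩ := a.1
    rw [b k hk, c k hk]

theorem condConcat_spec (hX : Stable P X) (A : Partition mΩ P) {S : ℕ → CondRaw Ω E}
    (hS : ∀ k, IsCond P X (S k)) :
    IsCond P X (condConcat P A S) ∧
      zeq P X (zset P (condConcat P A S)) (⋃ k, zset P (S k) ∩ {p | p.2 ∈ A.part k}) := by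
  have hc : IsCond P X (condConcat P A S) := by
    refine ⟨⟨?_, ?_, ?_⟩, ?_, MeasurableSet.iUnion fun k => (A.meas k).inter (hS k).2.2⟩
    · choose y hy using fun k => (hS k).1.1
      exact ⟨A.concat y, y, hy, EventuallyEq.rfl⟩
    · rintro f ⟨x, hx, h⟩ g hfg
      exact ⟨x, hx, hfg.symm.trans h⟩
    · intro B f hf
      change B.concat f ∈ concatSet P A fun k => (S k).1
      have hf' : ∀ j, ∀ k, ∃ y ∈ (S k).1, ∀ᵐ ω ∂P, ω ∈ A.part k → f j ω = y ω :=
        fun j => mem_concatSet.1 (hf j)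
      choose y hy hfy using hf'
      refine mem_concatSet.2 fun k => ⟨B.concat fun j => y j k,
        (hS k).1.2.2 B _ fun j => hy j k, ?_⟩
      filter_upwards [B.good, concat_eq B f, concat_eq B fun j => y j k,
        ae_all_iff.2 fun j => hfy j k] with ω a b c d e
      obtain ⟨j, hj⟩ := a.1
      rw [b j hj, c j hj, d j e]
    · rintro f ⟨x, hx, h⟩
      exact hX.2.1 _ (hX.2.2 A x fun k => (hS k).2.1 (hx k)) _ h.symm
  refine ⟨hc, zle.antisymm ?_ ?_⟩
  · intro x _
    obtain ⟨hm, ⟨h1, f, hf, hxf⟩, -⟩ := indBase_spec hc x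
    have hk : ∀ k, ale P (indBase P (condConcat P A S) x ∩ A.part k) (indBase P (S k) x) := by
      intro k
      obtain ⟨y, hy, hfy⟩ := mem_concatSet.1 hf k
      refine (indBase_spec (hS k) x).2.2 _ (hm.inter (A.meas k)) ?_ ⟨y, hy, ?_⟩
      · filter_upwards [h1, A.good] with ω a b c
        obtain ⟨j, hj⟩ := mem_iUnion.1 (a c.1)
        rw [b.2 k j c.2 hj.1]
        exact hj.2
      · filter_upwards [hxf, hfy] with ω a b c
        rw [a c.1, b c.2]
    filter_upwards [A.good, ae_all_iff.2 hk] with ω a b c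
    obtain ⟨k, hk⟩ := a.1
    exact mem_iUnion.2 ⟨k, b k ⟨c, hk⟩, hk⟩
  · intro x _
    have hsp := fun k => indBase_spec (hS k) x
    choose y hy hxy using fun k => (hsp k).2.1.2
    have := (indBase_spec hc x).2.2 (⋃ k, indBase P (S k) x ∩ A.part k)
      (MeasurableSet.iUnion fun k => (hsp k).1.inter (A.meas k)) (by
        filter_upwards [ae_all_iff.2 fun k => (hsp k).2.1.1] with ω a b
        obtain ⟨k, hk⟩ := mem_iUnion.1 b
        exact mem_iUnion.2 ⟨k, hk.2, a k hk.1⟩)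
      ⟨A.concat y, ⟨y, hy, EventuallyEq.rfl⟩, by
        filter_upwards [concat_eq A y, ae_all_iff.2 hxy] with ω a b c
        obtain ⟨k, hk⟩ := mem_iUnion.1 c
        rw [a k hk.2, b k hk.1]⟩
    filter_upwards [this] with ω a b
    obtain ⟨k, hk⟩ := mem_iUnion.1 b
    exact a (mem_iUnion.2 ⟨k, hk⟩)

/-- The outer measure transported to extensional subsets of `X × Ω`. -/
def mz (P : @Measure Ω mΩ) (X : Set (Ω → E)) (μs : CondRaw Ω E → Ω → ℝ≥0∞)
    (Z : Set ((Ω → E) × Ω)) : Ω → ℝ≥0∞ := μs (mkc P X Z)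

variable {μs : CondRaw Ω E → Ω → ℝ≥0∞}

theorem mz_congr (hX : Stable P X) (hμ : IsStableOuter P X μs) {S : CondRaw Ω E}
    (hS : IsCond P X S) {Z : Set ((Ω → E) × Ω)} (hZ : MeasurableSet[extSig P X] Z)
    (h : zeq P X (zset P S) Z) : μs S =ᵐ[P] mz P X μs Z := by
  obtain ⟨h1, h2⟩ := mkc_spec hX hZ
  exact hμ.2.1 _ _ hS h1 ((ceq_iff hS h1).2 (h.trans h2.symm))

theorem mz_zeq (hX : Stable P X) (hμ : IsStableOuter P X μs) {W : Set ((Ω → E) × Ω)}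
    (hW : MeasurableSet[extSig P X] W) {Z : Set ((Ω → E) × Ω)} (hZ : MeasurableSet[extSig P X] Z)
    (h : zeq P X W Z) : mz P X μs W =ᵐ[P] mz P X μs Z := by
  obtain ⟨h1, h2⟩ := mkc_spec hX hW
  exact mz_congr hX hμ h1 hZ (h2.trans h)

theorem mz_restrict (hX : Stable P X) (hμ : IsStableOuter P X μs) {Z : Set ((Ω → E) × Ω)}
    (hZ : MeasurableSet[extSig P X] Z) {B : Set Ω} (hB : MeasurableSet B) :
    mz P X μs (Z ∩ {p | p.2 ∈ B}) =ᵐ[P] B.indicator (mz P X μs Z) := by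
  obtain ⟨h1, h2⟩ := mkc_spec hX hZ
  obtain ⟨h3, h4⟩ := crestrict_spec h1 hB
  exact (mz_congr hX hμ h3 (hZ.inter (base_meas hB)) (h4.trans (h2.inter (zeq.refl _)))).symm.trans
    (hμ.2.2.2.1 _ h1 B hB)

theorem mz_outer (hX : Stable P X) (hμ : IsStableOuter P X μs) :
    AbsOuter P (extSig P X) (mz P X μs) where
  meas Z hZ := hμ.1 _ (mkc_spec hX hZ).1
  empty := by
    have h := mz_restrict hX hμ (Z := ∅) (@MeasurableSet.empty _ (extSig P X)) MeasurableSet.empty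
    simpa using h
  mono Z W hZ hW hZW := by
    obtain ⟨h1, h2⟩ := mkc_spec hX hZ
    obtain ⟨h3, h4⟩ := mkc_spec hX hW
    exact hμ.2.2.2.2.1 _ _ h1 h3
      ((cle_iff h1 h3).2 (h2.le.trans ((zle_of_subset hZW).trans h4.symm.le)))
  sub Z hZ := by
    have hs := fun k => mkc_spec hX (hZ k)
    obtain ⟨h3, h4⟩ := cSupFam_spec hX fun k => (hs k).1
    have e : zeq P X (⋃ k, zset P (mkc P X (Z k))) (⋃ k, Z k) := by
      intro x hx
      filter_upwards [ae_all_iff.2 fun k => (hs k).2 x hx] with ω a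
      simp [a]
    have h5 := mz_congr hX hμ h3 (MeasurableSet.iUnion hZ) (h4.trans e)
    filter_upwards [h5, hμ.2.2.2.2.2 _ fun k => (hs k).1] with ω a b
    rw [← a]
    exact b

theorem cm_zeq (hX : Stable P X) (hμ : IsStableOuter P X μs) {W : Set ((Ω → E) × Ω)}
    (hW : MeasurableSet[extSig P X] W) {Z : Set ((Ω → E) × Ω)} (hZ : MeasurableSet[extSig P X] Z)
    (h : zeq P X W Z) (hc : AbsCM P (extSig P X) (mz P X μs) W) :
    AbsCM P (extSig P X) (mz P X μs) Z := by
  intro U hU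
  filter_upwards [hc U hU, mz_zeq hX hμ (hU.inter hW) (hU.inter hZ) ((zeq.refl U).inter h),
    mz_zeq hX hμ (hU.diff hW) (hU.diff hZ) ((zeq.refl U).inter h.compl)] with ω a b c
  rw [← a, b, c]

theorem cm_base (hX : Stable P X) (hμ : IsStableOuter P X μs) {B : Set Ω}
    (hB : MeasurableSet B) : AbsCM P (extSig P X) (mz P X μs) {p | p.2 ∈ B} := by
  intro U hU
  filter_upwards [mz_restrict hX hμ hU hB, mz_restrict hX hμ hU hB.compl] with ω a b
  have e : U \ {p : (Ω → E) × Ω | p.2 ∈ B} = U ∩ {p | p.2 ∈ Bᶜ} := rfl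
  rw [e, a, b]
  by_cases h : ω ∈ B <;> simp [h]

theorem cara_iff (hX : Stable P X) (hμ : IsStableOuter P X μs) {S : CondRaw Ω E}
    (hS : IsCond P X S) :
    CaraMeasurable P X μs S ↔ AbsCM P (extSig P X) (mz P X μs) (zset P S) := by
  obtain ⟨c1, c2⟩ := ccompl_spec hX hS
  have key : ∀ T, IsCond P X T → ∀ Z, MeasurableSet[extSig P X] Z → zeq P X (zset P T) Z →
      (((fun ω => μs (cInf₂ P X T S) ω + μs (cInf₂ P X T (ccompl P X S)) ω) =ᵐ[P] μs T) ↔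
      (fun ω => mz P X μs (Z ∩ zset P S) ω + mz P X μs (Z \ zset P S) ω) =ᵐ[P] mz P X μs Z) := by
    intro T hT Z hZ h
    obtain ⟨i1, i2⟩ := cInf₂_spec hX hT hS
    obtain ⟨j1, j2⟩ := cInf₂_spec hX hT c1
    have e1 := mz_congr hX hμ i1 (hZ.inter (zset_meas hS)) (i2.trans (h.inter (zeq.refl _)))
    have e2 := mz_congr hX hμ j1 (hZ.diff (zset_meas hS)) (j2.trans (h.inter c2))
    have e3 := mz_congr hX hμ hT hZ h
    constructor
    · intro H
      filter_upwards [e1, e2, e3, H] with ω a b c d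
      rw [← a, ← b, ← c, d]
    · intro H
      filter_upwards [e1, e2, e3, H] with ω a b c d
      rw [a, b, c, d]
  constructor
  · intro H Z hZ
    obtain ⟨h1, h2⟩ := mkc_spec hX hZ
    exact (key _ h1 Z hZ h2).1 (H _ h1)
  · intro H T hT
    exact (key T hT _ (zset_meas hT) (zeq.refl _)).2 (H _ (zset_meas hT))

end Corr

end CondMT

namespace CondMT

/-- **Proposition 3.10 (conditional Carathéodory criterion).**  For a stable outer
measure `μ*` on the conditional power set of a stable set `X`, the collection of all
stably `μ*`-measurable conditional subsets is a stable σ-algebra, and the restriction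
of `μ*` to this collection is a stable measure. -/
theorem stableOuter_caratheodory
    {Ω E : Type*} {mΩ : MeasurableSpace Ω} (P : @Measure Ω mΩ)
    [IsProbabilityMeasure P] (X : Set (Ω → E)) (hX : Stable P X)
    (μs : CondRaw Ω E → Ω → ℝ≥0∞) (hμs : IsStableOuter P X μs) :
    IsStableSigma P X {S | IsCond P X S ∧ CaraMeasurable P X μs S} ∧
      IsStableMeasureOn P X {S | IsCond P X S ∧ CaraMeasurable P X μs S} μs := by
  have hO := mz_outer hX hμs
  have hcond : ∀ S ∈ {S | IsCond P X S ∧ CaraMeasurable P X μs S}, IsCond P X S :=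
    fun S hS => hS.1
  have hcm : ∀ S ∈ {S | IsCond P X S ∧ CaraMeasurable P X μs S},
      AbsCM P (extSig P X) (mz P X μs) (zset P S) :=
    fun S hS => (cara_iff hX hμs hS.1).1 hS.2
  have hmem : ∀ S, IsCond P X S → ∀ Z, MeasurableSet[extSig P X] Z → zeq P X (zset P S) Z →
      AbsCM P (extSig P X) (mz P X μs) Z →
      S ∈ {S | IsCond P X S ∧ CaraMeasurable P X μs S} := fun S hS Z hZ h hc =>
    ⟨hS, (cara_iff hX hμs hS).2 (cm_zeq hX hμs hZ (zset_meas hS) h.symm hc)⟩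
  have htop : ctop X ∈ {S | IsCond P X S ∧ CaraMeasurable P X μs S} :=
    hmem _ (ctop_cond hX) _ (@MeasurableSet.univ _ (extSig P X)) (zset_ctop hX) hO.cm_univ
  refine ⟨⟨⟨⟨_, htop⟩, hcond, ?_, ?_⟩, htop, ?_, ?_⟩, ⟨?_, ?_, ?_⟩, ?_, ?_⟩
  · intro S hS T hT h
    exact hmem T hT _ (zset_meas hS.1) ((ceq_iff hS.1 hT).1 h).symm (hcm S hS)
  · intro A S hS
    obtain ⟨h1, h2⟩ := condConcat_spec hX A fun k => (hS k).1
    have hm : ∀ k, MeasurableSet[extSig P X] (zset P (S k) ∩ {p | p.2 ∈ A.part k}) :=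
      fun k => (zset_meas (hS k).1).inter (base_meas (A.meas k))
    exact hmem _ h1 _ (MeasurableSet.iUnion hm) h2 (hO.cm_iUnion hm fun k =>
      hO.cm_inter (zset_meas (hS k).1) (base_meas (A.meas k)) (hcm _ (hS k))
        (cm_base hX hμs (A.meas k)))
  · intro S hS
    obtain ⟨h1, h2⟩ := ccompl_spec hX hS.1
    exact hmem _ h1 _ (zset_meas hS.1).compl h2 (hO.cm_compl (zset_meas hS.1) (hcm S hS))
  · intro S hS
    obtain ⟨h1, h2⟩ := cSupFam_spec hX fun k => (hS k).1
    have hm := fun k => zset_meas (hS k).1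
    exact hmem _ h1 _ (MeasurableSet.iUnion hm) h2 (hO.cm_iUnion hm fun k => hcm _ (hS k))
  · exact fun S hS => hμs.1 S hS.1
  · exact fun S hS T hT h => hμs.2.1 S T hS.1 hT.1 h
  · exact fun A S hS => hμs.2.2.1 A S fun k => (hS k).1
  · intro S hS
    have h := hμs.2.2.2.1 S hS.1 S.2 hS.1.2.2
    have e : crestrict S S.2 = S := by simp [crestrict]
    rwa [e] at h
  · intro S hS hd _
    obtain ⟨h1, h2⟩ := cSupFam_spec hX fun k => (hS k).1
    have hm := fun k => zset_meas (hS k).1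
    have h3 := hO.tsum hm (fun k => hcm _ (hS k)) (fun i j hij =>
      (mz_zeq hX hμs ((hm i).inter (hm j)) (@MeasurableSet.empty _ (extSig P X))
        ((cdisjoint_iff hX (hS i).1 (hS j).1).1 (hd i j hij))).trans hO.empty)
    filter_upwards [h3, mz_congr hX hμs h1 (MeasurableSet.iUnion hm) h2,
      ae_all_iff.2 fun k => mz_congr hX hμs (hS k).1 (hm k) (zeq.refl _)] with ω a b c
    rw [b, a]
    exact tsum_congr fun k => (c k).symm

end CondMT
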